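/- Let κ ≥ 0. (i) For every η ≥ −κ² the equation η − G(y) + κ²P₋(y) = 0 has a unique solution y = ρ₊(η,κ) in [1,∞), and η ↦ ρ₊(η,κ) is increasing on [−κ², ∞) with ρ₊(−κ²,κ) = 1. (ii) For every η ≤ −κ² the equation η + G(y) + κ²P₊(y) = 0 has a unique solution y = ρ₋(η,κ) in [1,∞), and η ↦ ρ₋(η,κ) is decreasing on (−∞, −κ²] with ρ₋(−κ²,κ) = 1. In particular, for fixed κ ≥ 0 the resulting map η ↦ ρ(η,κ) (defined piecewise by ρ₋ for η ≤ −κ² and ρ₊ for η ≥ −κ²) maps ℝ onto [1,∞) in a 2-to-1 fashion away from its minimum ρ(−κ²,κ) = 1. -/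

import Mathlib

/-! Equation (i) gives `η` as the function `G - κ² P₋` of `y`, and equation (ii) as `-(G + κ² P₊)`.
On `[1, ∞)` the functions `G` and `P₊` are strictly increasing, hence `P₋ = 1 / P₊` is decreasing,
and `G y ≥ √(y (y - 1)) ≥ y - 1` is unbounded. So `η` is a continuous bijection of `[1, ∞)` onto
`[-κ², ∞)`, strictly increasing, in case (i), and onto `(-∞, -κ²]`, strictly decreasing, in
case (ii); `ρ₊` and `ρ₋` are the two inverses. -/

noncomputable section

/-- `G(y) = √(y(y−1)) + ln(√y + √(y−1))`. -/
def Gf (y : ℝ) : ℝ := Real.sqrt (y * (y - 1)) + Real.log (Real.sqrt y + Real.sqrt (y - 1))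

/-- `P₊(y) = 2y − 1 + 2√(y(y−1))`. -/
def Pp (y : ℝ) : ℝ := 2 * y - 1 + 2 * Real.sqrt (y * (y - 1))

/-- `P₋(y) = 2y − 1 − 2√(y(y−1))`. -/
def Pm (y : ℝ) : ℝ := 2 * y - 1 - 2 * Real.sqrt (y * (y - 1))

open Set Filter Function

section Inverse

variable {α β : Type*} {f : α → β} {s : Set α} {t : Set β}

lemma eq_invFunOn_iff_of_bijOn [Nonempty α] {a : α} {b : β} (h : BijOn f s t) (ha : a ∈ s)
    (hb : b ∈ t) : a = invFunOn f s b ↔ f a = b := by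
  constructor
  · rintro rfl
    exact h.surjOn.rightInvOn_invFunOn hb
  · rintro rfl
    exact (h.injOn.leftInvOn_invFunOn ha).symm

variable [LinearOrder α] [Nonempty α] [Preorder β]

lemma strictMonoOn_invFunOn (hf : MonotoneOn f s) (h : SurjOn f s t) :
    StrictMonoOn (invFunOn f s) t := by
  intro x hx y hy hxy
  by_contra! hle
  have hfle := hf (h.mapsTo_invFunOn hy) (h.mapsTo_invFunOn hx) hle
  rw [h.rightInvOn_invFunOn hy, h.rightInvOn_invFunOn hx] at hfle
  exact hxy.not_ge hfle

lemma strictAntiOn_invFunOn (hf : AntitoneOn f s) (h : SurjOn f s t) :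
    StrictAntiOn (invFunOn f s) t :=
  (strictMonoOn_invFunOn (β := βᵒᵈ) hf.dual_right h).dual_left

end Inverse

section HalfLine

variable {α β : Type*} [ConditionallyCompleteLinearOrder α] [DenselyOrdered α]
  [TopologicalSpace α] [OrderTopology α] [LinearOrder β] [TopologicalSpace β]
  [OrderClosedTopology β] {f : α → β} {a : α}

lemma bijOn_Ici_of_strictMonoOn (hf : StrictMonoOn f (Ici a)) (hcont : ContinuousOn f (Ici a))
    (htop : Tendsto f atTop atTop) : BijOn f (Ici a) (Ici (f a)) :=
  have : Nonempty α := ⟨a⟩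
  ⟨fun _ hx => hf.monotoneOn self_mem_Ici hx hx, hf.injOn,
    isPreconnected_Ici.intermediate_value_Ici self_mem_Ici (le_principal_iff.2 (Ici_mem_atTop a))
      hcont htop⟩

lemma bijOn_Iic_of_strictAntiOn (hf : StrictAntiOn f (Ici a)) (hcont : ContinuousOn f (Ici a))
    (hbot : Tendsto f atTop atBot) : BijOn f (Ici a) (Iic (f a)) :=
  bijOn_Ici_of_strictMonoOn (β := βᵒᵈ) hf.dual_right hcont hbot

end HalfLine

section Potentials

variable {y : ℝ}

lemma strictMonoOn_sqrt_mul_sub_one : StrictMonoOn (fun y : ℝ => √(y * (y - 1))) (Ici 1) := by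
  intro x (hx : 1 ≤ x) y _ hxy
  exact Real.sqrt_lt_sqrt (by nlinarith) (by nlinarith)

lemma Gf_eq_sqrt_add_arcosh (hy : 0 ≤ y) : Gf y = √(y * (y - 1)) + Real.arcosh √y := by
  rw [Gf, Real.arcosh, Real.sq_sqrt hy]

lemma Gf_one : Gf 1 = 0 := by simp [Gf]

lemma strictMonoOn_Gf : StrictMonoOn Gf (Ici 1) := by
  have harcosh : StrictMonoOn (fun y => Real.arcosh √y) (Ici 1) := by
    intro x (hx : 1 ≤ x) y (hy : 1 ≤ y) hxy
    exact Real.strictMonoOn_arcosh (mem_Ioi.2 (by positivity)) (mem_Ioi.2 (by positivity))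
      (Real.sqrt_lt_sqrt (by positivity) hxy)
  exact (strictMonoOn_sqrt_mul_sub_one.add harcosh).congr fun y hy =>
    (Gf_eq_sqrt_add_arcosh (zero_le_one.trans hy)).symm

lemma continuousOn_Gf : ContinuousOn Gf (Ici 1) := by
  have harcosh : ContinuousOn (fun y => Real.arcosh √y) (Ici 1) :=
    Real.continuousOn_arcosh.comp (by fun_prop) fun _ hy => Real.one_le_sqrt.2 hy
  exact (ContinuousOn.add (by fun_prop) harcosh).congr fun y hy =>
    Gf_eq_sqrt_add_arcosh (zero_le_one.trans hy)

lemma sub_one_le_Gf (hy : 1 ≤ y) : y - 1 ≤ Gf y := by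
  have hsqrt : y - 1 ≤ √(y * (y - 1)) := Real.le_sqrt_of_sq_le (by nlinarith)
  have harcosh : 0 ≤ Real.arcosh √y := Real.arcosh_nonneg (Real.one_le_sqrt.2 hy)
  rw [Gf_eq_sqrt_add_arcosh (by linarith)]
  linarith

lemma tendsto_Gf_atTop : Tendsto Gf atTop atTop :=
  tendsto_atTop_mono' _ ((eventually_ge_atTop 1).mono fun _ => sub_one_le_Gf)
    (tendsto_atTop_add_const_right _ _ tendsto_id)

lemma Pp_one : Pp 1 = 1 := by norm_num [Pp]

lemma Pm_one : Pm 1 = 1 := by norm_num [Pm]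

lemma continuous_Pp : Continuous Pp := by unfold Pp; fun_prop

lemma continuous_Pm : Continuous Pm := by unfold Pm; fun_prop

lemma strictMonoOn_Pp : StrictMonoOn Pp (Ici 1) := by
  intro x hx y hy hxy
  have hsqrt : √(x * (x - 1)) < √(y * (y - 1)) := strictMonoOn_sqrt_mul_sub_one hx hy hxy
  unfold Pp
  linarith

lemma one_le_Pp (hy : 1 ≤ y) : 1 ≤ Pp y :=
  Pp_one.symm.trans_le (strictMonoOn_Pp.monotoneOn self_mem_Ici hy hy)

lemma Pm_eq_inv_Pp (hy : 1 ≤ y) : Pm y = (Pp y)⁻¹ := by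
  have hsq : √(y * (y - 1)) ^ 2 = y * (y - 1) := Real.sq_sqrt (by nlinarith)
  apply eq_inv_of_mul_eq_one_left
  unfold Pm Pp
  linear_combination -4 * hsq

lemma antitoneOn_Pm : AntitoneOn Pm (Ici 1) := by
  intro x hx y hy hxy
  rw [Pm_eq_inv_Pp hx, Pm_eq_inv_Pp hy]
  exact inv_anti₀ (zero_lt_one.trans_le (one_le_Pp hx)) (strictMonoOn_Pp.monotoneOn hx hy hxy)

lemma Pm_le_one (hy : 1 ≤ y) : Pm y ≤ 1 :=
  (antitoneOn_Pm self_mem_Ici hy hy).trans_eq Pm_one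

end Potentials

/-- The rescaled time `η` at which `ρ₊ = y`, i.e. equation (i) solved for `η`, with `c = κ²`. -/
def etaPlus (c y : ℝ) : ℝ := Gf y - c * Pm y

/-- The rescaled time `η` at which `ρ₋ = y`, i.e. equation (ii) solved for `η`, with `c = κ²`. -/
def etaMinus (c y : ℝ) : ℝ := -(Gf y + c * Pp y)

/-- The branch `ρ₊` of `ρ` as a function of `η`, with `c = κ²`: the inverse of `etaPlus c` on
`[1, ∞)`. Its values at `η < -c` are junk. -/
def rhoPlus (c : ℝ) : ℝ → ℝ := invFunOn (etaPlus c) (Ici 1)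

/-- The branch `ρ₋` of `ρ` as a function of `η`, with `c = κ²`: the inverse of `etaMinus c` on
`[1, ∞)`. Its values at `η > -c` are junk. -/
def rhoMinus (c : ℝ) : ℝ → ℝ := invFunOn (etaMinus c) (Ici 1)

section Branches

variable {c η y : ℝ}

lemma etaPlus_one (c : ℝ) : etaPlus c 1 = -c := by simp [etaPlus, Gf_one, Pm_one]

lemma etaMinus_one (c : ℝ) : etaMinus c 1 = -c := by simp [etaMinus, Gf_one, Pp_one]

lemma strictMonoOn_etaPlus (hc : 0 ≤ c) : StrictMonoOn (etaPlus c) (Ici 1) := by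
  intro x hx y hy hxy
  have hG : Gf x < Gf y := strictMonoOn_Gf hx hy hxy
  have hPm : c * Pm y ≤ c * Pm x := mul_le_mul_of_nonneg_left (antitoneOn_Pm hx hy hxy.le) hc
  unfold etaPlus
  linarith

lemma strictAntiOn_etaMinus (hc : 0 ≤ c) : StrictAntiOn (etaMinus c) (Ici 1) := by
  intro x hx y hy hxy
  have hG : Gf x < Gf y := strictMonoOn_Gf hx hy hxy
  have hPp : c * Pp x ≤ c * Pp y := mul_le_mul_of_nonneg_left (strictMonoOn_Pp hx hy hxy).le hc
  unfold etaMinus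
  linarith

lemma continuousOn_etaPlus (c : ℝ) : ContinuousOn (etaPlus c) (Ici 1) :=
  continuousOn_Gf.sub (continuous_Pm.const_mul c).continuousOn

lemma continuousOn_etaMinus (c : ℝ) : ContinuousOn (etaMinus c) (Ici 1) :=
  (continuousOn_Gf.add (continuous_Pp.const_mul c).continuousOn).neg

lemma tendsto_etaPlus_atTop (hc : 0 ≤ c) : Tendsto (etaPlus c) atTop atTop := by
  refine tendsto_atTop_mono' _ ?_ (tendsto_atTop_add_const_right _ (-c) tendsto_Gf_atTop)
  filter_upwards [eventually_ge_atTop 1] with y hy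
  have hPm : c * Pm y ≤ c := mul_le_of_le_one_right hc (Pm_le_one hy)
  unfold etaPlus
  linarith

lemma tendsto_etaMinus_atBot (hc : 0 ≤ c) : Tendsto (etaMinus c) atTop atBot := by
  refine tendsto_neg_atTop_atBot.comp (tendsto_atTop_mono' _ ?_ tendsto_Gf_atTop)
  filter_upwards [eventually_ge_atTop 1] with y hy
  exact le_add_of_nonneg_right (mul_nonneg hc (zero_le_one.trans (one_le_Pp hy)))

lemma bijOn_etaPlus (hc : 0 ≤ c) : BijOn (etaPlus c) (Ici 1) (Ici (-c)) :=
  etaPlus_one c ▸ bijOn_Ici_of_strictMonoOn (strictMonoOn_etaPlus hc) (continuousOn_etaPlus c)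
    (tendsto_etaPlus_atTop hc)

lemma bijOn_etaMinus (hc : 0 ≤ c) : BijOn (etaMinus c) (Ici 1) (Iic (-c)) :=
  etaMinus_one c ▸ bijOn_Iic_of_strictAntiOn (strictAntiOn_etaMinus hc) (continuousOn_etaMinus c)
    (tendsto_etaMinus_atBot hc)

lemma neg_lt_etaPlus (hc : 0 ≤ c) (hy : 1 < y) : -c < etaPlus c y :=
  (etaPlus_one c).symm.trans_lt (strictMonoOn_etaPlus hc self_mem_Ici hy.le hy)

lemma etaMinus_lt_neg (hc : 0 ≤ c) (hy : 1 < y) : etaMinus c y < -c :=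
  (strictAntiOn_etaMinus hc self_mem_Ici hy.le hy).trans_eq (etaMinus_one c)

lemma one_le_rhoPlus (hc : 0 ≤ c) (hη : -c ≤ η) : 1 ≤ rhoPlus c η :=
  (bijOn_etaPlus hc).surjOn.mapsTo_invFunOn hη

lemma one_le_rhoMinus (hc : 0 ≤ c) (hη : η ≤ -c) : 1 ≤ rhoMinus c η :=
  (bijOn_etaMinus hc).surjOn.mapsTo_invFunOn hη

lemma eq_rhoPlus_iff (hc : 0 ≤ c) (hη : -c ≤ η) (hy : 1 ≤ y) :
    y = rhoPlus c η ↔ η - Gf y + c * Pm y = 0 := by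
  rw [rhoPlus, eq_invFunOn_iff_of_bijOn (bijOn_etaPlus hc) hy hη, etaPlus]
  constructor <;> intro h <;> linarith

lemma eq_rhoMinus_iff (hc : 0 ≤ c) (hη : η ≤ -c) (hy : 1 ≤ y) :
    y = rhoMinus c η ↔ η + Gf y + c * Pp y = 0 := by
  rw [rhoMinus, eq_invFunOn_iff_of_bijOn (bijOn_etaMinus hc) hy hη, etaMinus]
  constructor <;> intro h <;> linarith

lemma rhoPlus_etaPlus (hc : 0 ≤ c) (hy : 1 ≤ y) : rhoPlus c (etaPlus c y) = y :=
  (bijOn_etaPlus hc).injOn.leftInvOn_invFunOn hy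

lemma rhoMinus_etaMinus (hc : 0 ≤ c) (hy : 1 ≤ y) : rhoMinus c (etaMinus c y) = y :=
  (bijOn_etaMinus hc).injOn.leftInvOn_invFunOn hy

lemma rhoPlus_neg_self (hc : 0 ≤ c) : rhoPlus c (-c) = 1 := by
  rw [← etaPlus_one c, rhoPlus_etaPlus hc le_rfl]

lemma rhoMinus_neg_self (hc : 0 ≤ c) : rhoMinus c (-c) = 1 := by
  rw [← etaMinus_one c, rhoMinus_etaMinus hc le_rfl]

lemma strictMonoOn_rhoPlus (hc : 0 ≤ c) : StrictMonoOn (rhoPlus c) (Ici (-c)) :=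
  strictMonoOn_invFunOn (strictMonoOn_etaPlus hc).monotoneOn (bijOn_etaPlus hc).surjOn

lemma strictAntiOn_rhoMinus (hc : 0 ≤ c) : StrictAntiOn (rhoMinus c) (Iic (-c)) :=
  strictAntiOn_invFunOn (strictAntiOn_etaMinus hc).antitoneOn (bijOn_etaMinus hc).surjOn

end Branches

/-- For `κ ≥ 0`: (i) for each `η ≥ −κ²` the equation `η − G(y) + κ²P₋(y) = 0` has a unique
solution `ρ₊(η) ∈ [1,∞)`, increasing in `η` with `ρ₊(−κ²) = 1`; (ii) for each `η ≤ −κ²`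
the equation `η + G(y) + κ²P₊(y) = 0` has a unique solution `ρ₋(η) ∈ [1,∞)`, decreasing
in `η` with `ρ₋(−κ²) = 1`.  In particular the resulting map `η ↦ ρ(η,κ)` maps `ℝ` onto
`[1,∞)` in a 2-to-1 fashion away from its minimum. -/
theorem rho_implicit_function (κ : ℝ) (hκ : 0 ≤ κ) :
    ∃ ρp ρm : ℝ → ℝ,
      (∀ η, -κ ^ 2 ≤ η →
        (1 ≤ ρp η ∧ η - Gf (ρp η) + κ ^ 2 * Pm (ρp η) = 0 ∧
          ∀ y, 1 ≤ y → η - Gf y + κ ^ 2 * Pm y = 0 → y = ρp η)) ∧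
      StrictMonoOn ρp (Set.Ici (-κ ^ 2)) ∧ ρp (-κ ^ 2) = 1 ∧
      (∀ η, η ≤ -κ ^ 2 →
        (1 ≤ ρm η ∧ η + Gf (ρm η) + κ ^ 2 * Pp (ρm η) = 0 ∧
          ∀ y, 1 ≤ y → η + Gf y + κ ^ 2 * Pp y = 0 → y = ρm η)) ∧
      StrictAntiOn ρm (Set.Iic (-κ ^ 2)) ∧ ρm (-κ ^ 2) = 1 ∧
      (∀ y, 1 < y → ∃ η₁ η₂, η₁ < -κ ^ 2 ∧ -κ ^ 2 < η₂ ∧ ρm η₁ = y ∧ ρp η₂ = y) := by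
  have hc : 0 ≤ κ ^ 2 := sq_nonneg κ
  refine ⟨rhoPlus (κ ^ 2), rhoMinus (κ ^ 2), fun η hη => ?plus, strictMonoOn_rhoPlus hc,
    rhoPlus_neg_self hc, fun η hη => ?minus, strictAntiOn_rhoMinus hc, rhoMinus_neg_self hc,
    fun y hy => ?preimages⟩
  case plus =>
    have hone := one_le_rhoPlus hc hη
    exact ⟨hone, (eq_rhoPlus_iff hc hη hone).1 rfl, fun y hy => (eq_rhoPlus_iff hc hη hy).2⟩
  case minus =>
    have hone := one_le_rhoMinus hc hη
    exact ⟨hone, (eq_rhoMinus_iff hc hη hone).1 rfl, fun y hy => (eq_rhoMinus_iff hc hη hy).2⟩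
  case preimages =>
    exact ⟨etaMinus (κ ^ 2) y, etaPlus (κ ^ 2) y, etaMinus_lt_neg hc hy, neg_lt_etaPlus hc hy,
      rhoMinus_etaMinus hc hy.le, rhoPlus_etaPlus hc hy.le⟩
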